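/- arXiv:1704.07995 — 2 statements merged into one kernel-verified Lean document; each statement's English description precedes it below -/
import Mathlib

section
/- Let 0 < α < 1, λ ≥ 0, T > 0, and let u : [0,T] → ℝ be absolutely continuous with s ↦ e^{λs}u(s) having integrable derivative on [0,T]. Then for every t ∈ [0,T], the composite identity I₀^{α,λ}[ᶜD₀^{α,λ}u](t) = u(t) − e^{-λt} u(0) holds, i.e. (1/Γ(α)) ∫₀ᵗ e^{-λ(t-s)} (t-s)^{α-1} · ᶜD₀^{α,λ}u(s) ds = u(t) − e^{-λt} u(0). -/
/-- The Caputo tempered fractional derivative of order `α ∈ (0,1)` with tempering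
parameter `lam`:
`ᶜD₀^{α,λ}u(t) = (e^{-λt}/Γ(1-α)) ∫₀ᵗ (t-s)^{-α} (d/ds)(e^{λs} u(s)) ds`. -/
noncomputable def caputoTempered (α lam : ℝ) (u : ℝ → ℝ) (t : ℝ) : ℝ :=
  (Real.exp (-lam * t) / Real.Gamma (1 - α)) *
    ∫ s in (0 : ℝ)..t, (t - s) ^ (-α) * deriv (fun s => Real.exp (lam * s) * u s) s


/-!
Multiplication by `exp (lam * t)` turns the tempered operators into the untempered ones: with
`f s = exp (lam * s) * u s`, the Caputo derivative is `exp (-lam * t)` times the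
Riemann–Liouville integral of order `1 - α` of `f'`, and the outer tempered integral is
`exp (-lam * t)` times the Riemann–Liouville integral of order `α`. By the semigroup law (Fubini
on a triangle, the inner integral being Euler's Beta integral) the two compose to the integral of
order `1`, so the fundamental theorem of calculus yields `exp (-lam * t) * (f t - f 0)`.
-/

open MeasureTheory Set Real
open ProbabilityTheory (beta beta_pos)

section Triangle

variable {E : Type*} [NormedAddCommGroup E] {a b : ℝ}

/-- The triangle `a < r ≤ s ≤ b` in the `(r, s)`-plane, the domain of integration on which iterated
integrals of Volterra type are exchanged. The strict inequality makes its sections at fixed `s`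
half-open, as interval integrals are. -/
def triangle (a b : ℝ) : Set (ℝ × ℝ) := {z | a < z.1 ∧ z.1 ≤ z.2 ∧ z.2 ≤ b}

lemma measurableSet_triangle : MeasurableSet (triangle a b) :=
  (measurableSet_lt measurable_const measurable_fst).inter
    ((measurableSet_le measurable_fst measurable_snd).inter
      (measurableSet_le measurable_snd measurable_const))

lemma triangle_subset_prod_univ : triangle a b ⊆ Ioc a b ×ˢ univ :=
  fun _ hz ↦ ⟨⟨hz.1, hz.2.1.trans hz.2.2⟩, trivial⟩

lemma indicator_triangle_of_fst_mem {r : ℝ} (hr : r ∈ Ioc a b) (F : ℝ × ℝ → E) :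
    (fun s ↦ (triangle a b).indicator F (r, s)) = (Icc r b).indicator fun s ↦ F (r, s) := by
  ext s
  simp [indicator, triangle, hr.1]

lemma indicator_triangle_of_fst_notMem {r : ℝ} (hr : r ∉ Ioc a b) (F : ℝ × ℝ → E) :
    (fun s ↦ (triangle a b).indicator F (r, s)) = 0 :=
  funext fun _ ↦ indicator_of_notMem (fun h ↦ hr (triangle_subset_prod_univ h).1) F

lemma indicator_triangle_of_snd_mem {s : ℝ} (hs : s ∈ Ioc a b) (F : ℝ × ℝ → E) :
    (fun r ↦ (triangle a b).indicator F (r, s)) = (Ioc a s).indicator fun r ↦ F (r, s) := by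
  ext r
  simp [indicator, triangle, hs.2]

lemma indicator_triangle_of_snd_notMem {s : ℝ} (hs : s ∉ Ioc a b) (F : ℝ × ℝ → E) :
    (fun r ↦ (triangle a b).indicator F (r, s)) = 0 :=
  funext fun _ ↦ indicator_of_notMem (fun h ↦ hs ⟨h.1.trans_le h.2.1, h.2.2⟩) F

lemma integral_indicator_triangle_fst [NormedSpace ℝ E] (F : ℝ × ℝ → E) (r : ℝ) :
    ∫ s, (triangle a b).indicator F (r, s) =
      (Ioc a b).indicator (fun r ↦ ∫ s in r..b, F (r, s)) r := by
  by_cases hr : r ∈ Ioc a b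
  · rw [indicator_triangle_of_fst_mem hr, integral_indicator measurableSet_Icc,
      integral_Icc_eq_integral_Ioc, ← intervalIntegral.integral_of_le hr.2, indicator_of_mem hr]
  · simp [indicator_triangle_of_fst_notMem hr, indicator_of_notMem hr]

lemma integral_indicator_triangle_snd [NormedSpace ℝ E] (F : ℝ × ℝ → E) (s : ℝ) :
    ∫ r, (triangle a b).indicator F (r, s) =
      (Ioc a b).indicator (fun s ↦ ∫ r in a..s, F (r, s)) s := by
  by_cases hs : s ∈ Ioc a b
  · rw [indicator_triangle_of_snd_mem hs, integral_indicator measurableSet_Ioc,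
      ← intervalIntegral.integral_of_le hs.1.le, indicator_of_mem hs]
  · simp [indicator_triangle_of_snd_notMem hs, indicator_of_notMem hs]

theorem intervalIntegral_swap_of_integrableOn_triangle [NormedSpace ℝ E] (hab : a ≤ b)
    {F : ℝ × ℝ → E} (hF : IntegrableOn F (triangle a b)) :
    ∫ s in a..b, ∫ r in a..s, F (r, s) = ∫ r in a..b, ∫ s in r..b, F (r, s) := by
  have hswap := integral_integral_swap (f := fun r s ↦ (triangle a b).indicator F (r, s))
    ((integrable_indicator_iff measurableSet_triangle).2 hF)
  simpa only [integral_indicator_triangle_fst, integral_indicator_triangle_snd,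
    integral_indicator measurableSet_Ioc, ← intervalIntegral.integral_of_le hab] using hswap.symm

theorem integrableOn_triangle (hab : a ≤ b) {F : ℝ × ℝ → E}
    (hF : AEStronglyMeasurable F (volume.restrict (triangle a b)))
    (hsection : ∀ᵐ r, r ∈ Ioc a b → IntervalIntegrable (fun s ↦ F (r, s)) volume r b)
    (hnorm : IntervalIntegrable (fun r ↦ ∫ s in r..b, ‖F (r, s)‖) volume a b) :
    IntegrableOn F (triangle a b) := by
  rw [← integrable_indicator_iff measurableSet_triangle, Measure.volume_eq_prod,
    integrable_prod_iff ((aestronglyMeasurable_indicator_iff measurableSet_triangle).2 hF)]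
  constructor
  · filter_upwards [hsection] with r hr
    by_cases hmem : r ∈ Ioc a b
    · rw [indicator_triangle_of_fst_mem hmem, integrable_indicator_iff measurableSet_Icc,
        ← intervalIntegrable_iff_integrableOn_Icc_of_le hmem.2]
      exact hr hmem
    · simp [indicator_triangle_of_fst_notMem hmem]
  · simp only [norm_indicator_eq_indicator_norm, integral_indicator_triangle_fst (‖F ·‖)]
    rwa [integrable_indicator_iff measurableSet_Ioc,
      ← intervalIntegrable_iff_integrableOn_Ioc_of_le hab]

end Triangle

section BetaKernel

variable {p q r b : ℝ}

lemma integral_rpow_mul_const_sub_rpow (hp : 0 < p) (hq : 0 < q) {c : ℝ} (hc : 0 < c) :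
    ∫ x in 0..c, x ^ (p - 1) * (c - x) ^ (q - 1) = beta p q * c ^ (p + q - 1) := by
  apply Complex.ofReal_injective
  calc ((∫ x in 0..c, x ^ (p - 1) * (c - x) ^ (q - 1) : ℝ) : ℂ)
    _ = ∫ x in 0..c, (x : ℂ) ^ ((p : ℂ) - 1) * ((c : ℂ) - x) ^ ((q : ℂ) - 1) := by
      rw [← intervalIntegral.integral_ofReal]
      refine intervalIntegral.integral_congr fun x hx ↦ ?_
      rw [uIcc_of_le hc.le] at hx
      simp only [Complex.ofReal_mul, Complex.ofReal_cpow hx.1,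
        Complex.ofReal_cpow (sub_nonneg.2 hx.2), Complex.ofReal_sub, Complex.ofReal_one]
    _ = (c : ℂ) ^ ((p : ℂ) + q - 1) * Complex.betaIntegral p q :=
      Complex.betaIntegral_scaled p q hc
    _ = ((beta p q * c ^ (p + q - 1) : ℝ) : ℂ) := by
      rw [Complex.betaIntegral_eq_Gamma_mul_div _ _ (by simpa) (by simpa), beta, mul_comm]
      push_cast [Complex.ofReal_cpow hc.le, ← Complex.Gamma_ofReal]
      rfl

lemma integral_const_sub_rpow_mul_sub_const_rpow (hp : 0 < p) (hq : 0 < q) (hrb : r < b) :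
    ∫ s in r..b, (b - s) ^ (p - 1) * (s - r) ^ (q - 1) = beta p q * (b - r) ^ (p + q - 1) := by
  have hshift := intervalIntegral.integral_comp_sub_left (a := r) (b := b)
    (fun x ↦ x ^ (p - 1) * ((b - r) - x) ^ (q - 1)) b
  simp only [sub_sub_sub_cancel_left, sub_self] at hshift
  rw [hshift, integral_rpow_mul_const_sub_rpow hp hq (sub_pos.2 hrb)]

lemma intervalIntegrable_const_sub_rpow_mul_sub_const_rpow (hp : 0 < p) (hq : 0 < q)
    (hrb : r < b) :
    IntervalIntegrable (fun s ↦ (b - s) ^ (p - 1) * (s - r) ^ (q - 1)) volume r b := by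
  apply intervalIntegral.intervalIntegrable_of_integral_ne_zero
  rw [integral_const_sub_rpow_mul_sub_const_rpow hp hq hrb]
  exact (mul_pos (beta_pos hp hq) (rpow_pos_of_pos (sub_pos.2 hrb) _)).ne'

end BetaKernel

section RiemannLiouville

variable {E : Type*} [NormedAddCommGroup E] [NormedSpace ℝ E] {a b p q : ℝ} {g : ℝ → E}

/-- The (untempered) Riemann–Liouville fractional integral of order `σ` with base point `a`, to
which the tempered operators are conjugate. -/
noncomputable def riemannLiouvilleIntegral (a σ : ℝ) (f : ℝ → E) (t : ℝ) : E :=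
  (1 / Gamma σ) • ∫ s in a..t, (t - s) ^ (σ - 1) • f s

lemma riemannLiouvilleIntegral_one (f : ℝ → E) (t : ℝ) :
    riemannLiouvilleIntegral a 1 f t = ∫ s in a..t, f s := by
  simp [riemannLiouvilleIntegral]

lemma aestronglyMeasurable_of_intervalIntegrable_rpow_smul {c : ℝ} (hab : a ≤ b)
    (hg : IntervalIntegrable (fun r ↦ (b - r) ^ c • g r) volume a b) :
    AEStronglyMeasurable g (volume.restrict (Ioc a b)) := by
  have hinv : Measurable fun r ↦ ((b - r) ^ c)⁻¹ := by fun_prop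
  have hg' := ((intervalIntegrable_iff_integrableOn_Ioo_of_le hab).1 hg).aestronglyMeasurable
  rw [← restrict_Ioo_eq_restrict_Ioc]
  refine (hinv.aestronglyMeasurable.smul hg').congr ?_
  filter_upwards [ae_restrict_mem measurableSet_Ioo] with r hr
  exact inv_smul_smul₀ (rpow_pos_of_pos (sub_pos.2 hr.2) _).ne' _

lemma integrableOn_triangle_rpow_mul_rpow_smul (hp : 0 < p) (hq : 0 < q) (hab : a ≤ b)
    (hg : IntervalIntegrable (fun r ↦ (b - r) ^ (p + q - 1) • g r) volume a b) :
    IntegrableOn (fun z : ℝ × ℝ ↦ ((b - z.2) ^ (p - 1) * (z.2 - z.1) ^ (q - 1)) • g z.1)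
      (triangle a b) := by
  refine integrableOn_triangle hab ?_ ?_ ?_
  · have hkernel : Measurable fun z : ℝ × ℝ ↦ (b - z.2) ^ (p - 1) * (z.2 - z.1) ^ (q - 1) := by
      fun_prop
    have hgm : AEStronglyMeasurable (fun z : ℝ × ℝ ↦ g z.1)
        (volume.restrict (Ioc a b ×ˢ univ)) := by
      rw [Measure.volume_eq_prod, ← Measure.prod_restrict]
      exact (aestronglyMeasurable_of_intervalIntegrable_rpow_smul hab hg).comp_fst
    exact hkernel.aestronglyMeasurable.smul
      (hgm.mono_measure (Measure.restrict_mono_set _ triangle_subset_prod_univ))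
  · filter_upwards [Measure.ae_ne volume b] with r hne hr
    rw [intervalIntegrable_iff_integrableOn_Ioc_of_le hr.2]
    exact (intervalIntegrable_const_sub_rpow_mul_sub_const_rpow hp hq
      (hr.2.lt_of_ne hne)).1.smul_const (g r)
  · refine (hg.norm.const_mul (beta p q)).congr_uIoo fun r hr ↦ ?_
    rw [uIoo_of_le hab] at hr
    have hnorm : ∀ s ∈ uIcc r b, ‖((b - s) ^ (p - 1) * (s - r) ^ (q - 1)) • g r‖ =
        (b - s) ^ (p - 1) * (s - r) ^ (q - 1) * ‖g r‖ := fun s hs ↦ by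
      rw [uIcc_of_le hr.2.le] at hs
      rw [norm_smul, norm_of_nonneg (mul_nonneg (rpow_nonneg (sub_nonneg.2 hs.2) _)
        (rpow_nonneg (sub_nonneg.2 hs.1) _))]
    beta_reduce
    rw [intervalIntegral.integral_congr hnorm, intervalIntegral.integral_mul_const,
      integral_const_sub_rpow_mul_sub_const_rpow hp hq hr.2, norm_smul,
      norm_of_nonneg (rpow_nonneg (sub_nonneg.2 hr.2.le) _), mul_assoc]

theorem integral_rpow_smul_integral_rpow_smul (hp : 0 < p) (hq : 0 < q)
    (hab : a ≤ b) (hg : IntervalIntegrable (fun r ↦ (b - r) ^ (p + q - 1) • g r) volume a b) :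
    ∫ s in a..b, (b - s) ^ (p - 1) • ∫ r in a..s, (s - r) ^ (q - 1) • g r =
      beta p q • ∫ r in a..b, (b - r) ^ (p + q - 1) • g r := by
  by_cases hE : CompleteSpace E; swap; · simp [intervalIntegral, integral, hE]
  calc ∫ s in a..b, (b - s) ^ (p - 1) • ∫ r in a..s, (s - r) ^ (q - 1) • g r
    _ = ∫ s in a..b, ∫ r in a..s, ((b - s) ^ (p - 1) * (s - r) ^ (q - 1)) • g r := by
      simp only [mul_smul, intervalIntegral.integral_smul]
    _ = ∫ r in a..b, ∫ s in r..b, ((b - s) ^ (p - 1) * (s - r) ^ (q - 1)) • g r :=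
      intervalIntegral_swap_of_integrableOn_triangle hab
        (integrableOn_triangle_rpow_mul_rpow_smul hp hq hab hg)
    _ = ∫ r in a..b, beta p q • (b - r) ^ (p + q - 1) • g r := by
      refine intervalIntegral.integral_congr_uIoo fun r hr ↦ ?_
      rw [uIoo_of_le hab] at hr
      rw [intervalIntegral.integral_smul_const,
        integral_const_sub_rpow_mul_sub_const_rpow hp hq hr.2, mul_smul]
    _ = beta p q • ∫ r in a..b, (b - r) ^ (p + q - 1) • g r :=
      intervalIntegral.integral_smul _ _

theorem riemannLiouvilleIntegral_riemannLiouvilleIntegral (hp : 0 < p)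
    (hq : 0 < q) (hab : a ≤ b)
    (hg : IntervalIntegrable (fun r ↦ (b - r) ^ (p + q - 1) • g r) volume a b) :
    riemannLiouvilleIntegral a p (riemannLiouvilleIntegral a q g) b =
      riemannLiouvilleIntegral a (p + q) g b := by
  have hΓ : 1 / Gamma p * (1 / Gamma q) * beta p q = 1 / Gamma (p + q) := by
    have := (Gamma_pos_of_pos hp).ne'
    have := (Gamma_pos_of_pos hq).ne'
    rw [beta]
    field_simp
  simp only [riemannLiouvilleIntegral, smul_comm _ (1 / Gamma q), intervalIntegral.integral_smul,
    integral_rpow_smul_integral_rpow_smul hp hq hab hg]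
  rw [← hΓ]
  module

end RiemannLiouville

section Tempered

/-- The tempered Riemann–Liouville fractional integral `I^{σ,λ}` of order `σ` and tempering
parameter `lam`, the outer operator of the composite identity, here with an arbitrary base
point `a`. -/
noncomputable def temperedIntegral {E : Type*} [NormedAddCommGroup E] [NormedSpace ℝ E]
    (a σ lam : ℝ) (u : ℝ → E) (t : ℝ) : E :=
  (1 / Gamma σ) • ∫ s in a..t, (exp (-lam * (t - s)) * (t - s) ^ (σ - 1)) • u s

lemma temperedIntegral_exp_smul {E : Type*} [NormedAddCommGroup E] [NormedSpace ℝ E]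
    (a σ lam : ℝ) (v : ℝ → E) (t : ℝ) :
    temperedIntegral a σ lam (fun s ↦ exp (-lam * s) • v s) t =
      exp (-lam * t) • riemannLiouvilleIntegral a σ v t := by
  have hexp (s : ℝ) : exp (-lam * (t - s)) * (t - s) ^ (σ - 1) * exp (-lam * s) =
      exp (-lam * t) * (t - s) ^ (σ - 1) := by
    rw [mul_right_comm, ← exp_add]
    ring_nf
  simp only [temperedIntegral, riemannLiouvilleIntegral, smul_smul, hexp]
  simp only [mul_smul, intervalIntegral.integral_smul]
  exact smul_comm _ _ _

lemma caputoTempered_eq_exp_smul_riemannLiouvilleIntegral (α lam : ℝ) (u : ℝ → ℝ) :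
    caputoTempered α lam u = fun t ↦ exp (-lam * t) •
      riemannLiouvilleIntegral 0 (1 - α) (deriv fun s ↦ exp (lam * s) * u s) t := by
  ext t
  simp only [caputoTempered, riemannLiouvilleIntegral, smul_eq_mul, sub_sub_cancel_left]
  ring

end Tempered

section AbsolutelyContinuous

variable {f : ℝ → ℝ} {a b : ℝ}

lemma absolutelyContinuousOnInterval_congr {X : Type*} [PseudoMetricSpace X] {f g : ℝ → X}
    (hf : AbsolutelyContinuousOnInterval f a b) (hfg : EqOn f g (uIcc a b)) :
    AbsolutelyContinuousOnInterval g a b := by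
  refine hf.congr' (Filter.eventually_inf_principal.2 (.of_forall fun E hE ↦ ?_))
  refine Finset.sum_congr rfl fun i hi ↦ ?_
  rw [hfg (hE.1 i hi).1, hfg (hE.1 i hi).2]

lemma absolutelyContinuousOnInterval_of_differentiableAt
    (hf : ∀ x ∈ uIcc a b, DifferentiableAt ℝ f x)
    (hf' : IntervalIntegrable (deriv f) volume a b) : AbsolutelyContinuousOnInterval f a b := by
  have hconst : AbsolutelyContinuousOnInterval (fun _ ↦ f a) a b :=
    contDiffOn_const.absolutelyContinuousOnInterval
  refine absolutelyContinuousOnInterval_congr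
    ((hf'.absolutelyContinuousOnInterval_intervalIntegral left_mem_uIcc).fun_add hconst)
    fun x hx ↦ ?_
  have hsub : uIcc a x ⊆ uIcc a b := uIcc_subset_uIcc_left hx
  rw [intervalIntegral.integral_deriv_eq_sub (fun y hy ↦ hf y (hsub hy)) (hf'.mono_set hsub),
    sub_add_cancel]

lemma absolutelyContinuousOnInterval_exp_mul (lam : ℝ) (hf : AbsolutelyContinuousOnInterval f a b) :
    AbsolutelyContinuousOnInterval (fun s ↦ exp (lam * s) * f s) a b := by
  have hexp : ContDiff ℝ 1 fun s ↦ exp (lam * s) := by fun_prop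
  exact hexp.contDiffOn.absolutelyContinuousOnInterval.mul hf

lemma absolutelyContinuousOnInterval_exp_mul_iff (lam : ℝ) :
    AbsolutelyContinuousOnInterval (fun s ↦ exp (lam * s) * f s) a b ↔
      AbsolutelyContinuousOnInterval f a b := by
  refine ⟨fun h ↦ ?_, absolutelyContinuousOnInterval_exp_mul lam⟩
  simpa [← mul_assoc, ← exp_add] using absolutelyContinuousOnInterval_exp_mul (-lam) h

end AbsolutelyContinuous

theorem tempered_integral_caputo_composite_general {α T t : ℝ} (lam : ℝ) (hα0 : 0 < α)
    (hα1 : α < 1) {u : ℝ → ℝ} (hu : AbsolutelyContinuousOnInterval u 0 T) (ht : t ∈ Icc 0 T) :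
    temperedIntegral 0 α lam (caputoTempered α lam u) t = u t - exp (-lam * t) * u 0 := by
  set f := fun s ↦ exp (lam * s) * u s with hf_def
  have hf : AbsolutelyContinuousOnInterval f 0 t :=
    absolutelyContinuousOnInterval_exp_mul lam
      (hu.mono (uIcc_subset_uIcc_left (Icc_subset_uIcc ht)))
  have hint : IntervalIntegrable (fun r ↦ (t - r) ^ (α + (1 - α) - 1) • deriv f r) volume 0 t := by
    simpa using hf.intervalIntegrable_deriv
  calc temperedIntegral 0 α lam (caputoTempered α lam u) t
    _ = exp (-lam * t) •
          riemannLiouvilleIntegral 0 α (riemannLiouvilleIntegral 0 (1 - α) (deriv f)) t := by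
      rw [caputoTempered_eq_exp_smul_riemannLiouvilleIntegral, temperedIntegral_exp_smul]
    _ = exp (-lam * t) * ∫ s in 0..t, deriv f s := by
      rw [riemannLiouvilleIntegral_riemannLiouvilleIntegral hα0 (sub_pos.2 hα1) ht.1 hint,
        add_sub_cancel, riemannLiouvilleIntegral_one, smul_eq_mul]
    _ = exp (-lam * t) * (exp (lam * t) * u t - u 0) := by
      rw [hf.integral_deriv_eq_sub, hf_def]
      simp
    _ = u t - exp (-lam * t) * u 0 := by
      rw [mul_sub, ← mul_assoc, ← exp_add]
      simp

/-- Composite identity: the Riemann–Liouville tempered fractional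
integral of order `α` of the Caputo tempered fractional derivative of order `α`
recovers `u(t) - e^{-λt} u(0)`. -/
theorem tempered_integral_caputo_composite
    (α lam T : ℝ) (hα0 : 0 < α) (hα1 : α < 1) (hlam : 0 ≤ lam) (hT : 0 < T)
    (u : ℝ → ℝ)
    (hdiff : ∀ s ∈ Set.Icc (0 : ℝ) T, DifferentiableAt ℝ u s)
    (hint : IntervalIntegrable (deriv fun s => Real.exp (lam * s) * u s)
      MeasureTheory.volume 0 T) :
    ∀ t ∈ Set.Icc (0 : ℝ) T,
      (1 / Real.Gamma α) *
          ∫ s in (0 : ℝ)..t,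
            Real.exp (-lam * (t - s)) * (t - s) ^ (α - 1) * caputoTempered α lam u s =
        u t - Real.exp (-lam * t) * u 0 := by
  intro t ht
  have hf := absolutelyContinuousOnInterval_of_differentiableAt (fun s hs ↦
    DifferentiableAt.mul (by fun_prop) (hdiff s (uIcc_of_le hT.le ▸ hs))) hint
  exact tempered_integral_caputo_composite_general lam hα0 hα1
    ((absolutelyContinuousOnInterval_exp_mul_iff lam).1 hf) ht
end

section
/- Let 0 < α < 1 and define the Grünwald weights w_k = (-1)^k · C(α, k). Let (a_n)_{n≥0} be a sequence of non-negative real numbers satisfying, for every n ≥ 1, a_n ≤ (Σ_{k=0}^{n-1} w_k) · a_0 − Σ_{k=1}^{n-1} w_k · a_{n-k}. Then a_n ≤ a_0 for every n ≥ 1. -/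
/-- The Grünwald weights `w_k = (-1)^k C(α, k)`, where
`C(α, k) = α(α-1)⋯(α-k+1)/k!` is the generalized binomial coefficient. -/
noncomputable def grunwaldWeight (α : ℝ) (k : ℕ) : ℝ :=
  (-1 : ℝ) ^ k * ((∏ i ∈ Finset.range k, (α - i)) / (k.factorial : ℝ))

/-! Since `w₀ = 1`, the differences `bₙ = aₙ - a₀` satisfy `bₙ ≤ ∑_{k=1}^{n-1} (-wₖ) bₙ₋ₖ`. The
coefficients `-wₖ` are non-negative, so `bₙ ≤ 0` by strong induction on `n`. -/

theorem grunwaldWeight_zero (α : ℝ) : grunwaldWeight α 0 = 1 := by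
  simp [grunwaldWeight]

theorem grunwaldWeight_succ (α : ℝ) (k : ℕ) :
    grunwaldWeight α (k + 1) = grunwaldWeight α k * ((k - α) / (k + 1)) := by
  simp only [grunwaldWeight, Finset.prod_range_succ, Nat.factorial_succ, Nat.cast_mul,
    Nat.cast_succ, pow_succ]
  field_simp
  ring

theorem grunwaldWeight_nonpos {α : ℝ} (hα₀ : 0 ≤ α) (hα₁ : α ≤ 1) {k : ℕ} (hk : 1 ≤ k) :
    grunwaldWeight α k ≤ 0 := by
  induction k, hk using Nat.le_induction with
  | base => simpa [grunwaldWeight_succ, grunwaldWeight_zero] using hα₀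
  | succ k hk ih =>
    have hαk : α ≤ k := hα₁.trans (mod_cast hk)
    rw [grunwaldWeight_succ]
    exact mul_nonpos_of_nonpos_of_nonneg ih (div_nonneg (sub_nonneg.2 hαk) (by positivity))

theorem nonpos_of_le_sum_Icc_smul {R M : Type*} [Zero R] [Preorder R] [AddCommMonoid M]
    [PartialOrder M] [IsOrderedAddMonoid M] [SMulZeroClass R M] [PosSMulMono R M]
    {c : ℕ → R} (hc : ∀ k, 1 ≤ k → 0 ≤ c k) {b : ℕ → M}
    (hb : ∀ n, 1 ≤ n → b n ≤ ∑ k ∈ Finset.Icc 1 (n - 1), c k • b (n - k)) {n : ℕ} (hn : 1 ≤ n) :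
    b n ≤ 0 := by
  induction n using Nat.strong_induction_on with
  | _ n ih =>
    refine (hb n hn).trans (Finset.sum_nonpos fun k hk => ?_)
    obtain ⟨hk₁, hkn⟩ := Finset.mem_Icc.1 hk
    exact smul_nonpos_of_nonneg_of_nonpos (hc k hk₁) (ih (n - k) (by lia) (by lia))

theorem sum_range_smul_sub_sum_Icc_smul {R M : Type*} [Ring R] [AddCommGroup M] [Module R M]
    (w : ℕ → R) (v : ℕ → M) (x : M) {n : ℕ} (hn : 1 ≤ n) :
    (∑ k ∈ Finset.range n, w k) • x - ∑ k ∈ Finset.Icc 1 (n - 1), w k • v k =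
      w 0 • x + ∑ k ∈ Finset.Icc 1 (n - 1), -w k • (v k - x) := by
  rw [Finset.Icc_sub_one_right_eq_Ico_of_not_isMin (not_isMin_of_lt hn),
    Finset.sum_range_eq_add_Ico w hn]
  simp only [neg_smul, smul_sub, Finset.sum_neg_distrib, Finset.sum_sub_distrib, add_smul,
    Finset.sum_smul]
  abel

theorem grunwald_recursion_stability_general {E : Type*} [AddCommGroup E] [PartialOrder E]
    [IsOrderedAddMonoid E] [Module ℝ E] [PosSMulMono ℝ E] {α : ℝ} (hα₀ : 0 ≤ α) (hα₁ : α ≤ 1)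
    {a : ℕ → E}
    (hrec : ∀ n, 1 ≤ n → a n ≤ (∑ k ∈ Finset.range n, grunwaldWeight α k) • a 0 -
      ∑ k ∈ Finset.Icc 1 (n - 1), grunwaldWeight α k • a (n - k))
    {n : ℕ} (hn : 1 ≤ n) : a n ≤ a 0 := by
  have hdiff : ∀ m, 1 ≤ m → a m - a 0 ≤
      ∑ k ∈ Finset.Icc 1 (m - 1), -grunwaldWeight α k • (a (m - k) - a 0) := fun m hm => by
    have h := hrec m hm
    rwa [sum_range_smul_sub_sum_Icc_smul _ (fun k => a (m - k)) _ hm, grunwaldWeight_zero,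
      one_smul, ← sub_le_iff_le_add'] at h
  exact sub_nonpos.1 <| nonpos_of_le_sum_Icc_smul (b := fun m => a m - a 0)
    (fun k hk => neg_nonneg.2 (grunwaldWeight_nonpos hα₀ hα₁ hk)) hdiff hn

/-- Discrete stability: if `(a_n)` is non-negative and satisfies
`a_n ≤ (Σ_{k=0}^{n-1} w_k) a_0 - Σ_{k=1}^{n-1} w_k a_{n-k}` for all `n ≥ 1`,
then `a_n ≤ a_0` for all `n ≥ 1`. -/
theorem grunwald_recursion_stability
    (α : ℝ) (hα0 : 0 < α) (hα1 : α < 1)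
    (a : ℕ → ℝ) (ha : ∀ n, 0 ≤ a n)
    (hrec : ∀ n : ℕ, 1 ≤ n →
      a n ≤ (∑ k ∈ Finset.range n, grunwaldWeight α k) * a 0 -
        ∑ k ∈ Finset.Icc 1 (n - 1), grunwaldWeight α k * a (n - k)) :
    ∀ n : ℕ, 1 ≤ n → a n ≤ a 0 :=
  fun _ => grunwald_recursion_stability_general hα0.le hα1.le hrec
end
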